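/- arXiv:1406.3731 — 3 statements merged into one kernel-verified Lean document; each statement's English description precedes it below -/
import Mathlib

section
/- Let R be a ring and let A and B be R-modules such that, for every positive integer m, both the kernel and the cokernel of the multiplication-by-m map b ↦ mb from B to B are finite. Let 0 → B → E → A → 0 be an extension of R-modules and let ξ be the corresponding element of Ext^1_R(A,B). Then ξ has finite order in Ext^1_R(A,B) if and only if E has an R-submodule X such that B ∩ X and E/(B + X) are both finite. -/
/-!
Statement 7: Proposition 2.2 on near splittings.  The element of `Ext^1_R(A, B)`
corresponding to an extension `0 → B → E → A → 0` is the class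
`hS.extClass : Ext A B 1` attached to the short exact sequence.  (The instance
hypothesis `HasExt` is a provable smallness condition on the `Ext` groups of the
category of `R`-modules.)
-/

open CategoryTheory Abelian

noncomputable section

/-!
By the long exact sequence of `Ext(-, B)`, the Yoneda product of `ξ` with `g : B ⟶ Y` vanishes iff
`g` extends along `B → E`, so `m • ξ = 0` iff multiplication by `m` on `B` extends to a map
`r : E → B`.  For any linear map `f` out of `E`, with composite `φ` the restriction of `f` to `B`,
`B ∩ ker f` is the kernel of `φ` and `E/(B + ker f)` embeds in its cokernel.  Applied to `f = r`
this makes `X = ker r` a near complement of `B`.  Conversely, applied to the projection `E → E/X`,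
it shows that `B → E/X` has finite kernel and cokernel; such a map has an inverse up to a positive
integer `m`, and composing with `E → E/X` extends multiplication by `m` to `E`.
-/

section Ext

universe w v u

variable {C : Type u} [Category.{v} C] [Abelian C] [HasExt.{w} C]

lemma comp_mk₀_nsmul {X Y Z : C} {a : ℕ} (x : Ext X Y a) (n : ℕ) (g : Y ⟶ Z) :
    x.comp (Ext.mk₀ (n • g)) (add_zero a) = n • x.comp (Ext.mk₀ g) (add_zero a) := by
  have mk₀_nsmul : Ext.mk₀ (n • g) = n • Ext.mk₀ g := map_nsmul Ext.addEquiv₀.symm n g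
  rw [mk₀_nsmul]
  exact map_nsmul (Ext.bilinearComp X Y Z a 0 a (add_zero a) x) n (Ext.mk₀ g)

variable {S : ShortComplex C} (hS : S.ShortExact)

lemma extClass_comp_mk₀_eq_zero_iff {Y : C} (g : S.X₁ ⟶ Y) :
    hS.extClass.comp (Ext.mk₀ g) (add_zero 1) = 0 ↔ ∃ r : S.X₂ ⟶ Y, S.f ≫ r = g := by
  constructor
  · intro hg
    obtain ⟨x, hx⟩ := Ext.contravariant_sequence_exact₁ hS Y _ _ hg
    obtain ⟨r, rfl⟩ := (Ext.mk₀_bijective _ _).surjective x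
    rw [Ext.mk₀_comp_mk₀] at hx
    exact ⟨r, (Ext.mk₀_bijective _ _).injective hx⟩
  · rintro ⟨r, rfl⟩
    rw [← Ext.mk₀_comp_mk₀]
    exact hS.extClass_comp_assoc _

lemma nsmul_extClass_eq_zero_iff (n : ℕ) :
    n • hS.extClass = 0 ↔ ∃ r : S.X₂ ⟶ S.X₁, S.f ≫ r = n • 𝟙 S.X₁ := by
  rw [← extClass_comp_mk₀_eq_zero_iff hS, comp_mk₀_nsmul, Ext.comp_mk₀_id]

end Ext

section LinearMap

variable {R M N P : Type*} [Ring R] [AddCommGroup M] [AddCommGroup N] [AddCommGroup P]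
  [Module R M] [Module R N] [Module R P]

lemma finite_range_inf_ker_iff {i : M →ₗ[R] N} (hi : Function.Injective i) (f : N →ₗ[R] P) :
    ((LinearMap.range i ⊓ LinearMap.ker f : Submodule R N) : Set N).Finite ↔
      Finite (LinearMap.ker (f ∘ₗ i)) := by
  rw [← Submodule.map_comap_eq, ← LinearMap.ker_comp, Submodule.map_coe,
    Set.finite_image_iff hi.injOn]
  exact Set.finite_coe_iff.symm

lemma range_sup_ker_eq_comap_range_comp (i : M →ₗ[R] N) (f : N →ₗ[R] P) :
    LinearMap.range i ⊔ LinearMap.ker f = (LinearMap.range (f ∘ₗ i)).comap f := by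
  rw [LinearMap.range_comp, Submodule.comap_map_eq]

lemma mapQ_comap_injective (f : N →ₗ[R] P) (p : Submodule R P) :
    Function.Injective ((p.comap f).mapQ p f le_rfl) := by
  rw [← LinearMap.ker_eq_bot, Submodule.ker_mapQ, Submodule.mkQ_map_self]

lemma finite_quotient_range_sup_ker (i : M →ₗ[R] N) (f : N →ₗ[R] P)
    [Finite (P ⧸ LinearMap.range (f ∘ₗ i))] :
    Finite (N ⧸ (LinearMap.range i ⊔ LinearMap.ker f)) := by
  rw [range_sup_ker_eq_comap_range_comp]
  exact .of_injective _ (mapQ_comap_injective f _)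

lemma finite_quotient_range_comp (i : M →ₗ[R] N) {f : N →ₗ[R] P} (hf : Function.Surjective f)
    [hfin : Finite (N ⧸ (LinearMap.range i ⊔ LinearMap.ker f))] :
    Finite (P ⧸ LinearMap.range (f ∘ₗ i)) := by
  rw [range_sup_ker_eq_comap_range_comp] at hfin
  refine .of_surjective (Submodule.mapQ _ (LinearMap.range (f ∘ₗ i)) f le_rfl) ?_
  rw [← LinearMap.range_eq_top, Submodule.range_mapQ, LinearMap.range_eq_top.2 hf,
    Submodule.map_top, Submodule.range_mkQ]

lemma exists_comp_eq_mul_nsmul_id (φ : M →ₗ[R] N) {n k : ℕ}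
    (hker : ∀ x ∈ LinearMap.ker φ, n • x = 0) (hcoker : ∀ y, k • y ∈ LinearMap.range φ) :
    ∃ g : N →ₗ[R] M, g ∘ₗ φ = (n * k) • LinearMap.id := by
  let divide : LinearMap.range φ →ₗ[R] M :=
    (LinearMap.ker φ).liftQ (n • LinearMap.id) hker ∘ₗ φ.quotKerEquivRange.symm
  have divide_apply (x : M) (hx : φ x ∈ LinearMap.range φ) : divide ⟨φ x, hx⟩ = n • x := by
    simp [divide, LinearMap.quotKerEquivRange_symm_apply_image]
  refine ⟨divide ∘ₗ (k • LinearMap.id).codRestrict (LinearMap.range φ) hcoker, ?_⟩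
  ext x
  calc divide ⟨k • φ x, hcoker (φ x)⟩
      = divide (k • ⟨φ x, LinearMap.mem_range_self φ x⟩) := rfl
    _ = (n * k) • x := by rw [map_nsmul, divide_apply, smul_smul, mul_comm]

lemma exists_comp_eq_nsmul_id (φ : M →ₗ[R] N) [Finite (LinearMap.ker φ)]
    [Finite (N ⧸ LinearMap.range φ)] :
    ∃ m : ℕ, 0 < m ∧ ∃ g : N →ₗ[R] M, g ∘ₗ φ = m • LinearMap.id := by
  refine ⟨Nat.card (LinearMap.ker φ) * Nat.card (N ⧸ LinearMap.range φ),
    Nat.mul_pos Nat.card_pos Nat.card_pos, exists_comp_eq_mul_nsmul_id φ (fun x hx ↦ ?_) fun y ↦ ?_⟩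
  · exact congrArg Subtype.val (card_nsmul_eq_zero' (x := (⟨x, hx⟩ : LinearMap.ker φ)))
  · rw [← Submodule.Quotient.mk_eq_zero, Submodule.Quotient.mk_smul]
    exact card_nsmul_eq_zero'

lemma toAddSubgroup_range_nsmul_id (m : ℕ) :
    (LinearMap.range (m • LinearMap.id : M →ₗ[R] M)).toAddSubgroup =
      (zsmulAddGroupHom (m : ℤ) : M →+ M).range := by
  ext x
  simp

end LinearMap

theorem extension_class_finite_order_iff_general {R : Type*} [Ring R]
    [HasExt (ModuleCat R)] {S : ShortComplex (ModuleCat R)} (hS : S.ShortExact)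
    (hker : IsOfFinAddOrder hS.extClass →
      Finite (LinearMap.ker (addOrderOf hS.extClass • LinearMap.id : S.X₁ →ₗ[R] S.X₁)))
    (hcoker : IsOfFinAddOrder hS.extClass →
      Finite (S.X₁ ⧸ LinearMap.range (addOrderOf hS.extClass • LinearMap.id : S.X₁ →ₗ[R] S.X₁))) :
    IsOfFinAddOrder hS.extClass ↔
      ∃ X : Submodule R S.X₂,
        ((LinearMap.range S.f.hom ⊓ X : Submodule R S.X₂) : Set S.X₂).Finite ∧
        Finite (S.X₂ ⧸ (LinearMap.range S.f.hom ⊔ X)) := by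
  constructor
  · intro hξ
    obtain ⟨r, hr⟩ := (nsmul_extClass_eq_zero_iff hS _).1 (addOrderOf_nsmul_eq_zero hS.extClass)
    have hr_hom : r.hom ∘ₗ S.f.hom = addOrderOf hS.extClass • LinearMap.id :=
      congrArg ModuleCat.Hom.hom hr
    rw [← hr_hom] at hker hcoker
    have := hcoker hξ
    exact ⟨LinearMap.ker r.hom,
      (finite_range_inf_ker_iff hS.moduleCat_injective_f r.hom).2 (hker hξ),
      finite_quotient_range_sup_ker S.f.hom r.hom⟩
  · rintro ⟨X, hinf, hsup⟩
    rw [← X.ker_mkQ] at hinf hsup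
    have := (finite_range_inf_ker_iff hS.moduleCat_injective_f X.mkQ).1 hinf
    have := finite_quotient_range_comp S.f.hom X.mkQ_surjective
    obtain ⟨m, hm, g, hg⟩ := exists_comp_eq_nsmul_id (X.mkQ ∘ₗ S.f.hom)
    exact isOfFinAddOrder_iff_nsmul_eq_zero.2 ⟨m, hm, (nsmul_extClass_eq_zero_iff hS m).2
      ⟨ModuleCat.ofHom (g ∘ₗ X.mkQ), ModuleCat.hom_ext hg⟩⟩

/-- **Proposition 2.2.**  Let `R` be a ring and let `A` and `B` be `R`-modules
such that for every positive integer `m` both the kernel and the cokernel of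
multiplication by `m` on `B` are finite.  Let `0 → B → E → A → 0` be an
extension of `R`-modules with class `ξ ∈ Ext^1_R(A, B)`.  Then `ξ` has finite
order if and only if `E` has a submodule `X` such that `B ∩ X` and `E/(B + X)`
are finite. -/
theorem extension_class_finite_order_iff (R : Type) [Ring R]
    [HasExt.{0} (ModuleCat.{0} R)]
    (B E A : ModuleCat.{0} R) (i : B ⟶ E) (p : E ⟶ A) (w : i ≫ p = 0)
    (hS : (ShortComplex.mk i p w).ShortExact)
    (hker : ∀ m : ℕ, 0 < m → ({b : (B : Type) | m • b = 0} : Set B).Finite)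
    (hcoker : ∀ m : ℕ, 0 < m →
      Finite ((B : Type) ⧸ (AddMonoidHom.range
        ((zsmulAddGroupHom (m : ℤ)) : (B : Type) →+ (B : Type))))) :
    IsOfFinAddOrder hS.extClass ↔
      ∃ X : Submodule R E,
        ((LinearMap.range i.hom ⊓ X : Submodule R E) : Set E).Finite ∧
        Finite ((E : Type) ⧸ (LinearMap.range i.hom ⊔ X : Submodule R E)) :=
  extension_class_finite_order_iff_general hS
    (fun hξ ↦ hker _ hξ.addOrderOf_pos)
    (fun hξ ↦ by
      have := hcoker _ hξ.addOrderOf_pos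
      rwa [← toAddSubgroup_range_nsmul_id (R := R)] at this)

end
end

section
/- Let G be a group and D a ℤG-module whose underlying abelian group is a divisible Černikov group. If E is a ℤG-module containing a ℤG-submodule isomorphic to D such that the quotient E/D is finite, then E contains a finite ℤG-submodule F such that E/F is isomorphic as a ℤG-module to a quotient of D. -/
/-!
Statement 8: a `ℤG`-module extension of a finite module by a divisible Černikov
module can be rewritten as an extension of a finite module by a quotient of the
divisible module.
-/

open CategoryTheory

noncomputable section




/-- The rational circle `ℚ/ℤ`. -/
abbrev RatCircle : Type := ℚ ⧸ AddSubgroup.zmultiples (1 : ℚ)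

/-- The quasicyclic (Prüfer) `p`-group, realized as the `p`-primary part of `ℚ/ℤ`. -/
def pruferSubgroup (p : ℕ) : AddSubgroup RatCircle where
  carrier := {x | ∃ n : ℕ, (p ^ n : ℕ) • x = 0}
  zero_mem' := ⟨0, smul_zero _⟩
  add_mem' := by
    rintro a b ⟨m, hm⟩ ⟨n, hn⟩
    refine ⟨m + n, ?_⟩
    have ha : (p ^ m * p ^ n) • a = 0 := by rw [mul_comm, mul_smul, hm, smul_zero]
    have hb : (p ^ m * p ^ n) • b = 0 := by rw [mul_smul, hn, smul_zero]
    rw [smul_add, pow_add, ha, hb, add_zero]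
  neg_mem' := by
    rintro a ⟨m, hm⟩
    exact ⟨m, by rw [smul_neg, hm, neg_zero]⟩

/-- A group has a quasicyclic `p`-section if some quotient of a subgroup is
isomorphic to the Prüfer `p`-group. -/
def HasQuasicyclicSection (G : Type*) [Group G] (p : ℕ) : Prop :=
  ∃ (H : Subgroup G) (K : Subgroup H) (_ : K.Normal),
    Nonempty ((H ⧸ K) ≃* Multiplicative (pruferSubgroup p))

/-- The spectrum of a group: the set of primes `p` such that the group has a
section isomorphic to the quasicyclic `p`-group. -/
def groupSpectrum (G : Type*) [Group G] : Set ℕ :=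
  {p | p.Prime ∧ HasQuasicyclicSection G p}

/-- The spectrum of an (additive) abelian group, via `Multiplicative`. -/
abbrev addSpectrum (A : Type*) [AddGroup A] : Set ℕ :=
  groupSpectrum (Multiplicative A)

/-- An abelian group has finite rank if its torsion-free rank and all of its
`p`-ranks are finite. -/
def FiniteRankAbelian (A : Type*) [AddCommGroup A] : Prop :=
  (∃ n : ℕ, ∀ k : ℕ, (∃ f : (Fin k →₀ ℤ) →+ A, Function.Injective f) → k ≤ n) ∧
  ∀ p : ℕ, p.Prime → {a : A | (p : ℕ) • a = 0}.Finite

/-- A group has finite rank (in the sense appropriate for abelian groups: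
finite torsion-free rank and finite `p`-ranks). -/
def FiniteRankGroup (G : Type*) [Group G] : Prop :=
  (∃ n : ℕ, ∀ k : ℕ,
    (∃ f : Multiplicative (Fin k →₀ ℤ) →* G, Function.Injective f) → k ≤ n) ∧
  ∀ p : ℕ, p.Prime → {g : G | g ^ p = 1}.Finite

/-- A solvable group of finite rank: a solvable group all of whose abelian
sections have finite rank. -/
def SolvableOfFiniteRank (G : Type*) [Group G] : Prop :=
  IsSolvable G ∧
    ∀ (H : Subgroup G) (K : Subgroup H) (_ : K.Normal),
      (∀ x y : H ⧸ K, x * y = y * x) → FiniteRankGroup (H ⧸ K)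

/-- A group is virtually abelian. -/
def VirtuallyAbelian (G : Type*) [Group G] : Prop :=
  ∃ H : Subgroup G, H.index ≠ 0 ∧ ∀ x y : H, x * y = y * x


/-- A Černikov abelian group: it has a subgroup of finite index that is a direct
sum of finitely many quasicyclic groups. -/
def IsCernikov (A : Type*) [AddCommGroup A] : Prop :=
  ∃ (S : AddSubgroup A) (r : ℕ) (p : Fin r → ℕ),
    S.index ≠ 0 ∧ (∀ i, (p i).Prime) ∧
    Nonempty (S ≃+ ((i : Fin r) → pruferSubgroup (p i)))

/-!
Let `n` be the index of `D` in `E`. Multiplication by `n` maps `E` into `D`, so it is a morphism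
`e : E ⟶ D` of `ℤG`-modules whose restriction to `D` is multiplication by `n`. That restriction is
surjective because `D` is divisible, and its kernel is finite because a Černikov group has only
finitely many elements of order dividing `n`. As `D` has finite index in `E`, the kernel of `e` is
finite too, so `F = ker e` works and even `E/F ≅ D`.
-/

theorem finite_ker_of_finiteIndex_range {A B C : Type*} [AddGroup A] [AddGroup B]
    [AddZeroClass C] (f : A →+ B) (g : B →+ C) [f.range.FiniteIndex]
    (h : {a | g (f a) = 0}.Finite) : {b | g b = 0}.Finite := by
  have hker : Finite (f.range.addSubgroupOf g.ker) := by
    refine Set.Finite.of_finite_image ((h.image f).subset ?_) Subtype.val_injective.injOn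
    rintro _ ⟨⟨_, hb⟩, ⟨a, rfl⟩, rfl⟩
    exact ⟨a, hb, rfl⟩
  exact Finite.of_addSubgroup_quotient (G := g.ker) (f.range.addSubgroupOf g.ker)

theorem finite_torsion_of_injective {A B : Type*} [AddMonoid A] [AddMonoid B] (f : A →+ B)
    (hf : Function.Injective f) {n : ℕ} (h : {b : B | n • b = 0}.Finite) :
    {a : A | n • a = 0}.Finite :=
  (h.preimage hf.injOn).subset fun a (ha : n • a = 0) ↦ by
    rw [Set.mem_preimage, Set.mem_ofPred_eq, ← map_nsmul, ha, map_zero]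

theorem finite_torsion_pi {ι : Type*} [Finite ι] {A : ι → Type*} [∀ j, AddMonoid (A j)] {n : ℕ}
    (h : ∀ j, {a : A j | n • a = 0}.Finite) : {a : ∀ j, A j | n • a = 0}.Finite :=
  (Set.Finite.pi' h).subset fun _ ha j ↦ congr_fun ha j

theorem finite_torsion_pruferSubgroup (p : ℕ) {n : ℕ} (hn : 0 < n) :
    {x : pruferSubgroup p | n • x = 0}.Finite :=
  finite_torsion_of_injective (pruferSubgroup p).subtype Subtype.val_injective
    (AddCircle.finite_torsion (1 : ℚ) hn)

theorem IsCernikov.finite_torsion {A : Type*} [AddCommGroup A] (hA : IsCernikov A) {n : ℕ}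
    (hn : 0 < n) : {a : A | n • a = 0}.Finite := by
  obtain ⟨S, r, p, hS, -, ⟨φ⟩⟩ := hA
  have hSn : {s : S | n • s = 0}.Finite :=
    finite_torsion_of_injective φ.toAddMonoidHom φ.injective
      (finite_torsion_pi fun j ↦ finite_torsion_pruferSubgroup (p j) hn)
  have : S.subtype.range.FiniteIndex := ⟨by rwa [S.range_subtype]⟩
  refine finite_ker_of_finiteIndex_range S.subtype (nsmulAddMonoidHom n) ?_
  exact hSn.subset fun _ hs ↦ Subtype.ext hs

section Rep

universe u v w

variable {k : Type u} {G : Type v} [Semiring k] [Monoid G]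

theorem exists_comp_eq_of_forall_mem_range {A B C : Rep.{w} k G} (i : A ⟶ B)
    (hi : Function.Injective i.hom) (f : C ⟶ B) (hf : ∀ c, f.hom c ∈ Set.range i.hom) :
    ∃ e : C ⟶ A, e ≫ i = f := by
  let e : C →ₗ[k] A := (LinearEquiv.ofInjective i.hom.toLinearMap hi).symm ∘ₗ
    f.hom.toLinearMap.codRestrict i.hom.toLinearMap.range hf
  have hie (c : C) : i.hom (e c) = f.hom c := LinearEquiv.ofInjective_symm_apply (h := hi) _ _
  have he (g : G) (c : C) : e (C.ρ g c) = A.ρ g (e c) := hi <| by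
    rw [hie, Rep.hom_comm_apply, Rep.hom_comm_apply, hie]
  refine ⟨Rep.ofHom (e.intertwiningMap_of_isIntertwiningMap _ _ he), ?_⟩
  ext c
  exact hie c

theorem extension_of_divisible_cernikov_by_finite_general {D E : Rep.{w} k G} {n : ℕ}
    (hdiv : Function.Surjective fun d : D ↦ n • d) (htors : {d : D | n • d = 0}.Finite)
    (i : D ⟶ E) (hi : Function.Injective i.hom) [(i.hom : D →+ E).range.FiniteIndex]
    (hn : ∀ x : E, n • x ∈ (i.hom : D →+ E).range) :
    ∃ e : E ⟶ D, Function.Surjective e.hom ∧ {x : E | e.hom x = 0}.Finite := by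
  obtain ⟨e, he⟩ := exists_comp_eq_of_forall_mem_range i hi (n • 𝟙 E) hn
  have hie (x : E) : i.hom (e.hom x) = n • x := DFunLike.congr_fun (congr_arg Rep.Hom.hom he) x
  have hei (d : D) : e.hom (i.hom d) = n • d := hi <| by rw [hie, map_nsmul]
  refine ⟨e, fun d ↦ ?_, ?_⟩
  · obtain ⟨d', hd'⟩ := hdiv d
    exact ⟨i.hom d', (hei d').trans hd'⟩
  · refine finite_ker_of_finiteIndex_range (i.hom : D →+ E) (e.hom : E →+ D) ?_
    simpa only [AddMonoidHom.coe_coe, hei] using htors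

end Rep

/-- Let `G` be a group and `D` a `ℤG`-module whose underlying abelian group is a
divisible Černikov group.  If `E` is a `ℤG`-module containing a `ℤG`-submodule
isomorphic to `D` (realized by an injective morphism `i : D ⟶ E`) such that the
quotient `E/D` is finite, then `E` has a finite `ℤG`-submodule `F` (realized as
the kernel of a morphism `e : E ⟶ C` onto a quotient `C` of `D`) such that `E/F`
is isomorphic as a `ℤG`-module to a quotient of `D`. -/
theorem extension_of_divisible_cernikov_by_finite (G : Type) [Group G]
    (D E : Rep ℤ G)
    (hdiv : ∀ (d : (D : Type)) (m : ℕ), 0 < m → ∃ d' : (D : Type), m • d' = d)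
    (hcern : IsCernikov D)
    (i : D ⟶ E) (hinj : Function.Injective i.hom)
    (hfin : Finite ((E : Type) ⧸ (AddMonoidHom.mk' (fun d => i.hom d)
      (fun a b => by exact map_add i.hom a b)).range)) :
    ∃ (C : Rep ℤ G) (q : D ⟶ C) (e : E ⟶ C),
      Function.Surjective q.hom ∧ Function.Surjective e.hom ∧
      {x : (E : Type) | e.hom x = 0}.Finite := by
  have hpos : 0 < Nat.card (E ⧸ (i.hom : D →+ E).range) := @Nat.card_pos _ _ hfin
  have : (i.hom : D →+ E).range.FiniteIndex := ⟨hpos.ne'⟩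
  obtain ⟨e, he, hker⟩ := extension_of_divisible_cernikov_by_finite_general (hdiv · _ hpos)
    (hcern.finite_torsion hpos) i hinj (AddSubgroup.nsmul_index_mem _)
  exact ⟨D, 𝟙 D, e, Function.surjective_id, he, hker⟩

end
end

section
/- For any group G and any set of primes π, the class 𝔠(G,π) is closed under forming ℤG-module sections; that is, if A belongs to 𝔠(G,π), then every ℤG-module quotient of every ℤG-submodule of A belongs to 𝔠(G,π). -/
/-!
Statement 13: the class 𝔠(G, π) is closed under forming ℤG-module sections.
-/

open CategoryTheory

noncomputable section




/-- A `ℤG`-module (given as an object of `Rep ℤ G`) whose underlying abelian group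
is torsion-free, of finite rank, and `π`-spectral. -/
def NiceRep {G : Type} [Group G] (π : Set ℕ) (M : Rep.{0} ℤ G) : Prop :=
  (∀ g : M, g ≠ 0 → ¬IsOfFinAddOrder g) ∧ FiniteRankAbelian M ∧ addSpectrum M ⊆ π

/-- The class `𝒰` of solvable groups of finite rank. -/
def MemClassU (G : Type) [Group G] : Prop :=
  SolvableOfFiniteRank G ∧
  ∃ (N : Subgroup G) (_ : N.Normal),
    Group.IsNilpotent N ∧
    Group.FG (G ⧸ N) ∧ VirtuallyAbelian (G ⧸ N) ∧
    ∃ (r : ℕ) (T : Fin (r + 1) → Subgroup G),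
      Monotone T ∧ T 0 = ⊥ ∧
      ((T (Fin.last r) : Set G) = {g : G | g ∈ N ∧ IsOfFinOrder g}) ∧
      (∀ (i : Fin (r + 1)) (g t : G), t ∈ T i → g * t * g⁻¹ ∈ T i) ∧
      (∀ (i : Fin r) (n t : G), n ∈ N → t ∈ T i.succ →
        n * t * n⁻¹ * t⁻¹ ∈ T i.castSucc) ∧
      (∀ i : Fin r, (T i.castSucc).relIndex (T i.succ) = 0 →
        ∃ M : Rep ℤ (G ⧸ N), NiceRep (groupSpectrum G) M ∧
          ∃ φ : M → G,
            (∀ m : M, φ m ∈ T i.succ) ∧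
            (∀ m m' : M, (φ (m + m'))⁻¹ * (φ m * φ m') ∈ T i.castSucc) ∧
            (∀ t : G, t ∈ T i.succ → ∃ m : M, (φ m)⁻¹ * t ∈ T i.castSucc) ∧
            (∀ (g : G) (m : M),
              (φ (M.ρ (QuotientGroup.mk g) m))⁻¹ * (g * φ m * g⁻¹) ∈ T i.castSucc))

/-- The class `𝔠(G, π)`: the smallest class of `ℤG`-modules containing every
finite `ℤG`-module and every `ℤG`-module whose underlying abelian group is
torsion-free of finite rank and `π`-spectral, and closed under forming
`ℤG`-module quotients and extensions. -/
inductive MemC (G : Type) [Group G] (π : Set ℕ) : Rep ℤ G → Prop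
  | of_finite (A : Rep ℤ G) (h : Finite (A : Type)) : MemC G π A
  | of_nice (A : Rep ℤ G) (h : NiceRep π A) : MemC G π A
  | quot (A B : Rep ℤ G) (f : A ⟶ B) (hf : Function.Surjective f.hom)
      (hA : MemC G π A) : MemC G π B
  | ext (A B C : Rep ℤ G) (f : A ⟶ B) (g : B ⟶ C)
      (hinj : Function.Injective f.hom) (hsurj : Function.Surjective g.hom)
      (hexact : ∀ b : (B : Type), g.hom b = 0 ↔ ∃ a : (A : Type), f.hom a = b)
      (hA : MemC G π A) (hC : MemC G π C) : MemC G π B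

/-!
Consider the modules all of whose submodules lie in `𝔠(G, π)`. They include the generators of
`𝔠(G, π)`, since a submodule of a generator is again a generator. They are closed under quotients,
since a submodule of a quotient is the quotient of its inverse image, and under extensions, since a
submodule of an extension of `C` by `A` is an extension of its image in `C` by its intersection with
`A`. By minimality they exhaust `𝔠(G, π)`, which is therefore closed under submodules.
-/

section SubobjectCore

open Limits

universe v u

variable {C : Type u} [Category.{v} C]

/-- The objects all of whose subobjects satisfy `P`: the largest property implying `P` that is
closed under subobjects. -/
def subobjectCore (P : ObjectProperty C) : ObjectProperty C :=
  fun X => ∀ ⦃Y : C⦄ (i : Y ⟶ X) [Mono i], P Y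

variable [Abelian C] (P : ObjectProperty C)

instance [P.IsClosedUnderQuotients] : (subobjectCore P).IsClosedUnderQuotients where
  prop_of_epi f _ hX _ i _ := P.prop_of_epi (pullback.snd f i) (hX (pullback.fst f i))

instance [P.IsClosedUnderExtensions] : (subobjectCore P).IsClosedUnderExtensions where
  prop_X₂_of_shortExact {S} hS h₁ h₃ Y i _ := by
    have := hS.mono_f
    let p : Y ⟶ image (i ≫ S.g) := factorThruImage (i ≫ S.g)
    have hker : (kernel.ι p ≫ i) ≫ S.g = 0 :=
      calc (kernel.ι p ≫ i) ≫ S.g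
        _ = (kernel.ι p ≫ p) ≫ image.ι (i ≫ S.g) := by simp only [p, Category.assoc, image.fac]
        _ = 0 := by rw [kernel.condition, zero_comp]
    let j : kernel p ⟶ S.X₁ := hS.exact.lift (kernel.ι p ≫ i) hker
    have hj : j ≫ S.f = kernel.ι p ≫ i := hS.exact.lift_f _ _
    have : Mono (j ≫ S.f) := hj ▸ mono_comp _ _
    have : Mono j := mono_of_mono j S.f
    have hY : (ShortComplex.mk (kernel.ι p) p (kernel.condition p)).ShortExact :=
      { exact := ShortComplex.exact_kernel p }
    exact P.prop_X₂_of_shortExact hY (h₁ j) (h₃ (image.ι (i ≫ S.g)))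

end SubobjectCore

section Rep

universe w u v

variable {k : Type u} {G : Type v} [Ring k] [Monoid G]

theorem rep_comp_eq_zero_of_exact {A B C : Rep.{w} k G} {f : A ⟶ B} {g : B ⟶ C}
    (h : Function.Exact f.hom g.hom) : f ≫ g = 0 := by
  ext a
  exact h.apply_apply_eq_zero a

theorem rep_shortExact_iff (S : ShortComplex (Rep.{w} k G)) :
    S.ShortExact ↔ Function.Injective S.f.hom ∧ Function.Surjective S.g.hom ∧
      Function.Exact S.f.hom S.g.hom := by
  have hexact : S.Exact ↔ Function.Exact S.f.hom S.g.hom :=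
    (S.exact_map_iff_of_faithful (forget₂ _ (ModuleCat k))).symm.trans
      (ShortComplex.ShortExact.moduleCat_exact_iff_function_exact _)
  rw [← Rep.mono_iff_injective, ← Rep.epi_iff_surjective, ← hexact]
  exact ⟨fun h => ⟨h.mono_f, h.epi_g, h.exact⟩, fun ⟨hf, hg, h⟩ => .mk' h hf hg⟩

end Rep

theorem HasQuasicyclicSection.of_injective {H G : Type*} [Group H] [Group G] (φ : H →* G)
    (hφ : Function.Injective φ) {p : ℕ} (h : HasQuasicyclicSection H p) :
    HasQuasicyclicSection G p := by
  obtain ⟨L, K, hK, ⟨e⟩⟩ := h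
  let ε : L ≃* L.map φ := L.equivMapOfInjective φ hφ
  have hN : (K.map (ε : L →* L.map φ)).Normal := hK.map _ ε.surjective
  exact ⟨L.map φ, K.map (ε : L →* L.map φ), hN,
    ⟨(QuotientGroup.congr K (K.map (ε : L →* L.map φ)) ε rfl).symm.trans e⟩⟩

theorem groupSpectrum_subset_of_injective {H G : Type*} [Group H] [Group G] (φ : H →* G)
    (hφ : Function.Injective φ) : groupSpectrum H ⊆ groupSpectrum G :=
  fun _ ⟨hp, h⟩ => ⟨hp, h.of_injective φ hφ⟩

theorem FiniteRankAbelian.of_injective {A B : Type*} [AddCommGroup A] [AddCommGroup B]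
    (f : B →+ A) (hf : Function.Injective f) (h : FiniteRankAbelian A) :
    FiniteRankAbelian B := by
  obtain ⟨⟨n, hn⟩, htorsion⟩ := h
  refine ⟨⟨n, fun k ⟨g, hg⟩ => hn k ⟨f.comp g, hf.comp hg⟩⟩, fun p hp => ?_⟩
  refine ((htorsion p hp).preimage (f := f) hf.injOn).subset fun b (hb : p • b = 0) => ?_
  change p • f b = 0
  rw [← map_nsmul, hb, map_zero]

section Modules

variable {G : Type} [Group G] {π : Set ℕ}

theorem NiceRep.of_injective {A B : Rep.{0} ℤ G} (f : B →+ A) (hf : Function.Injective f)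
    (h : NiceRep π A) : NiceRep π B := by
  obtain ⟨htf, hrank, hspec⟩ := h
  refine ⟨fun b hb hfin => htf (f b) ?_ (f.isOfFinAddOrder hfin), hrank.of_injective f hf,
    (groupSpectrum_subset_of_injective (AddMonoidHom.toMultiplicative f) hf).trans hspec⟩
  exact (map_ne_zero_iff f hf).2 hb

namespace MemC

instance : ObjectProperty.IsClosedUnderQuotients (MemC G π) where
  prop_of_epi f _ hX := .quot _ _ f ((Rep.epi_iff_surjective f).1 inferInstance) hX

instance : ObjectProperty.IsClosedUnderExtensions (MemC G π) where
  prop_X₂_of_shortExact {S} hS h₁ h₃ := by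
    obtain ⟨hinj, hsurj, hexact⟩ := (rep_shortExact_iff S).1 hS
    exact .ext _ _ _ S.f S.g hinj hsurj hexact h₁ h₃

theorem le_of_finite_of_nice (P : ObjectProperty (Rep.{0} ℤ G)) [P.IsClosedUnderQuotients]
    [P.IsClosedUnderExtensions] (hfin : ∀ A : Rep.{0} ℤ G, Finite A → P A)
    (hnice : ∀ A : Rep.{0} ℤ G, NiceRep π A → P A) : MemC G π ≤ P := by
  intro A hA
  induction hA with
  | of_finite A h => exact hfin A h
  | of_nice A h => exact hnice A h
  | quot A B f hf _ ihA =>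
    have := (Rep.epi_iff_surjective f).2 hf
    exact P.prop_of_epi f ihA
  | ext A B C f g hinj hsurj hexact _ _ ihA ihC =>
    have hS : (ShortComplex.mk f g (rep_comp_eq_zero_of_exact hexact)).ShortExact :=
      (rep_shortExact_iff _).2 ⟨hinj, hsurj, hexact⟩
    exact P.prop_X₂_of_shortExact hS ihA ihC

theorem le_subobjectCore : MemC G π ≤ subobjectCore (MemC G π) := by
  refine le_of_finite_of_nice _ (fun A hA B i hi => ?_) (fun A hA B i hi => ?_)
  · exact .of_finite B (.of_injective i.hom ((Rep.mono_iff_injective i).1 hi))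
  · exact .of_nice B (hA.of_injective (i.hom : B →+ A) ((Rep.mono_iff_injective i).1 hi))

instance : ObjectProperty.IsClosedUnderSubobjects (MemC G π) where
  prop_of_mono i _ hA := le_subobjectCore _ hA i

end MemC

end Modules

/-- For any group `G` and any set of primes `π`, the class `𝔠(G, π)` is closed
under forming `ℤG`-module sections: if `A` belongs to `𝔠(G, π)`, `B ⟶ A` is an
injection (realizing `B` as a `ℤG`-submodule of `A`) and `B ⟶ C` is a surjection
(realizing `C` as a `ℤG`-module quotient of `B`), then `C` belongs to
`𝔠(G, π)`. -/
theorem memC_closed_under_sections (G : Type) [Group G] (π : Set ℕ)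
    (A B C : Rep ℤ G) (i : B ⟶ A) (q : B ⟶ C)
    (hA : MemC G π A) (hi : Function.Injective i.hom)
    (hq : Function.Surjective q.hom) : MemC G π C := by
  have : Mono i := (Rep.mono_iff_injective i).2 hi
  have : Epi q := (Rep.epi_iff_surjective q).2 hq
  have hB : MemC G π B := ObjectProperty.prop_of_mono (MemC G π) i hA
  exact ObjectProperty.prop_of_epi (MemC G π) q hB
end
end
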